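/- arXiv:1901.05396 — 2 statements merged into one kernel-verified Lean document; each statement's English description precedes it below -/
import Mathlib

section
/- Let (X,𝒰) be a uniform space such that for every uniformly continuous f : X → ℝ there is k ≥ 0 for which the set {x ∈ X : |f(x)| ≥ k} is uniformly isolated. Then a subset B ⊆ X is Bourbaki bounded in X if and only if for every entourage U ∈ 𝒰 the set B ∩ I_U is finite, where I_U = {x ∈ X : U[x] = {x}}. In particular, the set X' of limit points of X is Bourbaki bounded in X. -/
/-- `A` is uniformly isolated in a uniform space: there is an entourage `U`
with `U[x] = {x}` for all `x ∈ A`. -/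
def UnifIsolated {X : Type*} [UniformSpace X] (A : Set X) : Prop :=
  ∃ U ∈ uniformity X, ∀ x ∈ A, UniformSpace.ball x U = {x}

/-- `A` is Bourbaki bounded in `X`: every uniformly continuous real-valued
function on `X` is bounded on `A`. -/
def BourbakiBounded {X : Type*} [UniformSpace X] (A : Set X) : Prop :=
  ∀ f : X → ℝ, UniformContinuous f → ∃ M : ℝ, ∀ x ∈ A, |f x| ≤ M

theorem stmt4 {X : Type*} [UniformSpace X]
    (h : ∀ f : X → ℝ, UniformContinuous f →
      ∃ k : ℝ, 0 ≤ k ∧ UnifIsolated {x : X | k ≤ |f x|}) :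
    (∀ B : Set X,
        BourbakiBounded B ↔
          ∀ U ∈ uniformity X, (B ∩ {x : X | UniformSpace.ball x U = {x}}).Finite) ∧
      BourbakiBounded {x : X | x ∈ closure ({x}ᶜ : Set X)} := by
  refine ⟨fun B => ⟨fun hB U hU => ?_, fun hB f hf => ?_⟩, fun f hf => ?_⟩
  · by_contra hinf
    have hinf' : (B ∩ {x : X | UniformSpace.ball x U = {x}}).Infinite := hinf
    let e := hinf'.natEmbedding
    let g : ℕ → X := fun n => (e n : X)
    have hg : Function.Injective g := Subtype.val_injective.comp e.injective
    let f : X → ℝ := Function.extend g (fun n => (n : ℝ)) 0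
    have hfg : ∀ n, f (g n) = n := fun n => hg.extend_apply _ _ n
    have hball : ∀ n, UniformSpace.ball (g n) U = {g n} := fun n => (e n).2.2
    have hgB : ∀ n, g n ∈ B := fun n => (e n).2.1
    have key : ∀ x y, (x, y) ∈ U → (y, x) ∈ U → f x = f y := by
      intro x y hxy hyx
      by_cases hx : ∃ n, g n = x
      · obtain ⟨n, rfl⟩ := hx
        have : y ∈ UniformSpace.ball (g n) U := hxy
        rw [hball n] at this
        rw [Set.mem_singleton_iff.1 this]
      · by_cases hy : ∃ n, g n = y
        · obtain ⟨n, rfl⟩ := hy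
          have : x ∈ UniformSpace.ball (g n) U := hyx
          rw [hball n] at this
          rw [Set.mem_singleton_iff.1 this]
        · simp only [f]
          rw [Function.extend_apply' _ _ _ hx, Function.extend_apply' _ _ _ hy]
          rfl
    have hf : UniformContinuous f := by
      intro W hW
      rw [Filter.mem_map]
      filter_upwards [hU, symm_le_uniformity hU] with p h1 h2
      have := key p.1 p.2 h1 h2
      show (f p.1, f p.2) ∈ W
      rw [this]
      exact mem_uniformity_of_eq hW rfl
    obtain ⟨M, hM⟩ := hB f hf
    obtain ⟨n, hn⟩ := exists_nat_gt M
    have h1 := hM (g n) (hgB n)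
    rw [hfg] at h1
    linarith [le_abs_self (n : ℝ)]
  · obtain ⟨k, hk, U, hU, hI⟩ := h f hf
    obtain ⟨M, hM⟩ := ((hB U hU).image (fun x => |f x|)).bddAbove
    refine ⟨max k M, fun x hx => ?_⟩
    by_cases hkx : k ≤ |f x|
    · exact le_max_of_le_right (hM ⟨x, ⟨hx, hI x hkx⟩, rfl⟩)
    · exact le_max_of_le_left (not_le.1 hkx).le
  · obtain ⟨k, hk, U, hU, hI⟩ := h f hf
    refine ⟨k, fun x hx => ?_⟩
    by_contra hkx
    have h1 := hI x (not_le.1 hkx).le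
    obtain ⟨y, hy, hy'⟩ := mem_closure_iff_nhds.1 hx _ (UniformSpace.ball_mem_nhds x hU)
    rw [h1] at hy
    exact hy' hy
end

section
/- For every uniform space (X,𝒰) the following are equivalent: (a) every subset of X that is not Bourbaki bounded in X contains an infinite uniformly isolated subset; (b) for every subset A ⊆ X that is not Bourbaki bounded in X, there exist an entourage U ∈ 𝒰 and an infinite set B ⊆ A such that U[B] ⊆ A. -/
/-- The image `U[A] = ⋃ x ∈ A, U[x]` of a set under a relation. -/
def relImage {X : Type*} (U : Set (X × X)) (A : Set X) : Set X :=
  ⋃ x ∈ A, UniformSpace.ball x U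

theorem stmt5 {X : Type*} [UniformSpace X] :
    (∀ A : Set X, ¬ BourbakiBounded A → ∃ B ⊆ A, B.Infinite ∧ UnifIsolated B) ↔
      (∀ A : Set X, ¬ BourbakiBounded A →
        ∃ U ∈ uniformity X, ∃ B ⊆ A, B.Infinite ∧ relImage U B ⊆ A) := by
  constructor
  · intro h A hA
    obtain ⟨B, hBA, hB, U, hU, hUB⟩ := h A hA
    refine ⟨U, hU, B, hBA, hB, ?_⟩
    intro y hy
    simp only [relImage, Set.mem_iUnion] at hy
    obtain ⟨x, hx, hy⟩ := hy
    rw [hUB x hx] at hy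
    rw [Set.mem_singleton_iff.1 hy]
    exact hBA hx
  · intro h A hA
    unfold BourbakiBounded at hA
    push Not at hA
    obtain ⟨f, hf, hfA⟩ := hA
    choose s hsA hs using hfA
    let x : ℕ → X := fun n => Nat.rec (s 0) (fun _ p => s (|f p| + 1)) n
    have hx1 : ∀ n, |f (x n)| + 1 < |f (x (n+1))| := fun n => hs _
    have hxA : ∀ n, x n ∈ A := by
      intro n
      cases n with
      | zero => exact hsA _
      | succ n => exact hsA _
    have hmono : StrictMono (fun n => |f (x n)|) :=
      strictMono_nat_of_lt_succ (fun n => by have := hx1 n; linarith)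
    have hlt : ∀ m n, m < n → |f (x m)| + 1 < |f (x n)| := by
      intro m n hmn
      have h2 : |f (x (m+1))| ≤ |f (x n)| := hmono.monotone (Nat.succ_le_of_lt hmn)
      have := hx1 m
      linarith
    have hge : ∀ n : ℕ, (n : ℝ) ≤ |f (x n)| := by
      intro n
      induction n with
      | zero => simp
      | succ n ih => have := hx1 n; push_cast; linarith
    have hD : ¬ BourbakiBounded (Set.range x) := by
      intro hD
      obtain ⟨M, hM⟩ := hD f hf
      obtain ⟨n, hn⟩ := exists_nat_gt M
      have := hM (x n) ⟨n, rfl⟩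
      have := hge n
      linarith
    obtain ⟨U, hU, B, hBD, hB, hUB⟩ := h _ hD
    have hV := hf (Metric.dist_mem_uniformity (α := ℝ) one_pos)
    refine ⟨B, hBD.trans (Set.range_subset_iff.2 hxA), hB, _, Filter.inter_mem hU hV, ?_⟩
    intro b hb
    ext y
    simp only [Set.mem_singleton_iff]
    constructor
    · rintro ⟨hy1, hy2⟩
      have hy : y ∈ Set.range x := hUB (Set.mem_biUnion hb hy1)
      obtain ⟨m, rfl⟩ := hy
      obtain ⟨n, rfl⟩ := hBD hb
      have hd : |f (x n) - f (x m)| < 1 := hy2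
      have h1 := abs_sub_abs_le_abs_sub (f (x n)) (f (x m))
      have h2 := abs_sub_abs_le_abs_sub (f (x m)) (f (x n))
      rw [abs_sub_comm (f (x m))] at h2
      rcases lt_trichotomy m n with hl | hl | hl
      · have := hlt _ _ hl; linarith
      · rw [hl]
      · have := hlt _ _ hl; linarith
    · rintro rfl
      exact mem_uniformity_of_eq (Filter.inter_mem hU hV) rfl
end
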